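/- Let u : A → A' be a flat ring morphism with A Noetherian, let d ∈ A, and let e ≥ 1 be such that (0 :_A d^e) = (0 :_A d^{e+1}). Then (0 :_{A'} d^e) = (0 :_{A'} d^{e+1}) and (0 :_{A'} d^{e+1}) ∩ d^e A' = 0. -/

import Mathlib

universe u

/-!
Flatness turns the annihilator of an element `a` of `A` into its extension:
`(0 :_{A'} a) = (0 :_A a) A'`. The equality of annihilators of `d ^ e` and `d ^ (e + 1)` therefore
passes from `A` to `A'`. Once the kernels of the powers of an endomorphism agree at two consecutive
exponents they are constant from there on, so if `d ^ e * y` is killed by `d ^ e`, then `y` is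
killed by `d ^ (2 * e)`, hence already by `d ^ e`.
-/

section Endomorphism

variable {R M : Type*} [Semiring R] [AddCommMonoid M] [Module R M] {f : Module.End R M} {k : ℕ}

theorem ker_pow_eq_ker_pow_add (h : LinearMap.ker (f ^ k) = LinearMap.ker (f ^ (k + 1))) (n : ℕ) :
    LinearMap.ker (f ^ k) = LinearMap.ker (f ^ (k + n)) := by
  induction n with
  | zero => rfl
  | succ n ih =>
    calc LinearMap.ker (f ^ k)
        = LinearMap.ker (f ^ (k + 1)) := h
      _ = (LinearMap.ker (f ^ k)).comap f := by rw [pow_succ, Module.End.mul_eq_comp,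
          LinearMap.ker_comp]
      _ = (LinearMap.ker (f ^ (k + n))).comap f := by rw [ih]
      _ = LinearMap.ker (f ^ (k + (n + 1))) := by rw [← add_assoc, pow_succ,
          Module.End.mul_eq_comp, LinearMap.ker_comp]

theorem disjoint_ker_pow_range_pow (h : LinearMap.ker (f ^ k) = LinearMap.ker (f ^ (k + 1))) :
    Disjoint (LinearMap.ker (f ^ k)) (LinearMap.range (f ^ k)) := by
  rw [Submodule.disjoint_def]
  rintro _ hker ⟨y, rfl⟩
  have hy : y ∈ LinearMap.ker (f ^ (k + k)) := by
    rwa [pow_add, LinearMap.mem_ker, Module.End.mul_apply]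
  rwa [← ker_pow_eq_ker_pow_add h k] at hy

end Endomorphism

section PrincipalIdeal

variable {R : Type*} [CommSemiring R]

theorem bot_colon_span_singleton (a : R) :
    (⊥ : Ideal R).colon (Ideal.span {a}) = Submodule.torsionBy R R a := by
  ext x
  rw [Ideal.mem_colon_span_singleton, Submodule.mem_bot, Submodule.mem_torsionBy_iff, smul_eq_mul,
    mul_comm]

theorem bot_colon_inf_span_pow_eq_bot {a : R} {k : ℕ}
    (h : (⊥ : Ideal R).colon (Ideal.span {a ^ k}) =
      (⊥ : Ideal R).colon (Ideal.span {a ^ (k + 1)})) :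
    (⊥ : Ideal R).colon (Ideal.span {a ^ k}) ⊓ Ideal.span {a ^ k} = ⊥ := by
  have ker_pow (n : ℕ) : (⊥ : Ideal R).colon (Ideal.span {a ^ n}) =
      LinearMap.ker (LinearMap.mulLeft R a ^ n) := by
    rw [bot_colon_span_singleton, LinearMap.pow_mulLeft]
    rfl
  have range_pow : Ideal.span {a ^ k} = LinearMap.range (LinearMap.mulLeft R a ^ k) := by
    rw [LinearMap.pow_mulLeft]
    exact (Ideal.range_mul' (a ^ k)).symm
  rw [ker_pow, ker_pow] at h
  rw [ker_pow, range_pow]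
  exact (disjoint_ker_pow_range_pow h).eq_bot

end PrincipalIdeal

section Flat

theorem torsionBy_eq_torsionBy_smul_top {R M : Type*} [CommRing R] [AddCommGroup M] [Module R M]
    [Module.Flat R M] (a : R) :
    Submodule.torsionBy R M a = Submodule.torsionBy R R a • (⊤ : Submodule R M) := by
  apply le_antisymm
  · intro x hx
    have relation : ∑ _i : Unit, a • x = 0 := by simpa using hx
    obtain ⟨k, c, y, x_eq, ac_eq_zero⟩ :=
      Module.Flat.isTrivialRelation_of_sum_smul_eq_zero relation
    rw [show x = ∑ j, c () j • y j from x_eq ()]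
    refine Submodule.sum_mem _ fun j _ => Submodule.smul_mem_smul ?_ Submodule.mem_top
    simpa using ac_eq_zero j
  · rw [Submodule.smul_le]
    intro r hr m _
    rw [Submodule.mem_torsionBy_iff, smul_smul, ← smul_eq_mul,
      (Submodule.mem_torsionBy_iff a r).mp hr, zero_smul]

variable {A A' : Type*} [CommRing A] [CommRing A'] [Algebra A A'] [Module.Flat A A']

theorem bot_colon_span_algebraMap (a : A) :
    (⊥ : Ideal A').colon (Ideal.span {algebraMap A A' a}) =
      ((⊥ : Ideal A).colon (Ideal.span {a})).map (algebraMap A A') := by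
  apply Submodule.restrictScalars_injective A
  rw [← Ideal.smul_top_eq_map, bot_colon_span_singleton, bot_colon_span_singleton,
    ← torsionBy_eq_torsionBy_smul_top]
  ext x
  simp only [Submodule.restrictScalars_mem, Submodule.mem_torsionBy_iff, algebraMap_smul]

theorem annihilator_stable_flat_base_change_general {d : A} {e : ℕ}
    (hstab : (⊥ : Ideal A).colon (Ideal.span {d ^ e}) =
      (⊥ : Ideal A).colon (Ideal.span {d ^ (e + 1)})) :
    (⊥ : Ideal A').colon (Ideal.span {algebraMap A A' d ^ e}) =
        (⊥ : Ideal A').colon (Ideal.span {algebraMap A A' d ^ (e + 1)}) ∧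
      (⊥ : Ideal A').colon (Ideal.span {algebraMap A A' d ^ (e + 1)}) ⊓
          Ideal.span {algebraMap A A' d ^ e} = ⊥ := by
  have stable : (⊥ : Ideal A').colon (Ideal.span {algebraMap A A' d ^ e}) =
      (⊥ : Ideal A').colon (Ideal.span {algebraMap A A' d ^ (e + 1)}) := by
    rw [← map_pow, ← map_pow, bot_colon_span_algebraMap, bot_colon_span_algebraMap, hstab]
  refine ⟨stable, ?_⟩
  rw [← stable]
  exact bot_colon_inf_span_pow_eq_bot stable

end Flat

/-- **Flat base change of stabilized annihilators.** Let `u : A → A'` be a flat ring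
morphism with `A` Noetherian, `d ∈ A` and `e ≥ 1` with `(0 :_A dᵉ) = (0 :_A dᵉ⁺¹)`. Then
`(0 :_{A'} dᵉ) = (0 :_{A'} dᵉ⁺¹)` and `(0 :_{A'} dᵉ⁺¹) ∩ dᵉA' = 0`. -/
theorem annihilator_stable_flat_base_change
    {A A' : Type u} [CommRing A] [CommRing A'] [IsNoetherianRing A] [Algebra A A']
    (hflat : Module.Flat A A') (d : A) (e : ℕ) (he : 1 ≤ e)
    (hstab : (⊥ : Ideal A).colon (Ideal.span {d ^ e}) =
      (⊥ : Ideal A).colon (Ideal.span {d ^ (e + 1)})) :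
    (⊥ : Ideal A').colon (Ideal.span {algebraMap A A' d ^ e}) =
        (⊥ : Ideal A').colon (Ideal.span {algebraMap A A' d ^ (e + 1)}) ∧
      (⊥ : Ideal A').colon (Ideal.span {algebraMap A A' d ^ (e + 1)}) ⊓
          Ideal.span {algebraMap A A' d ^ e} = ⊥ :=
  annihilator_stable_flat_base_change_general hstab
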